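/- arXiv:0904.4199 — 2 statements merged into one kernel-verified Lean document; each statement's English description precedes it below -/
import Mathlib

section
/- Let L > 0 and let f : (−L, L) → ℝ be a measurable function with 0 ≤ sign(ξ)·f(ξ) ≤ 1 for a.e. ξ. If for some strictly convex continuously differentiable function φ : ℝ → ℝ one has ∫_{−L}^{L} φ'(ξ) · (𝓜f(ξ) − f(ξ)) dξ = 0, then f(ξ) = 𝓜f(ξ) for a.e. ξ ∈ (−L, L). -/
/-!
With `u = ∫ f`, the bounds on `f` give `M(-L, ·) ≤ f ≤ M(L, ·)` a.e., hence `-L ≤ u ≤ L`, and so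
`∫ (𝓜f - f) = u - u = 0` (`integral_Mfun`). The weight `φ'` in the hypothesis may therefore be
replaced by `φ'(u) - φ'`. Since `φ'` is strictly increasing and `𝓜f - f` is nonnegative to the left
of `u` and nonpositive to the right (`Mfun_sub_sign`), the new integrand is nonnegative a.e. with
zero integral, so it vanishes a.e.; its weight vanishes only at `ξ = u`, whence `f = 𝓜f` a.e.
-/

open MeasureTheory Set Filter

/-- The Maxwellian `M(u, ξ)`: equals `1` on `0 < ξ < u`, `-1` on `u < ξ < 0`, `0` otherwise. -/
noncomputable def Mfun (u ξ : ℝ) : ℝ :=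
  if 0 < ξ ∧ ξ < u then 1 else if u < ξ ∧ ξ < 0 then -1 else 0

/-- The projection `𝓜 f = M(u_f, ·)` with `u_f = ∫_{-L}^{L} f`. -/
noncomputable def proj (L : ℝ) (f : ℝ → ℝ) (ξ : ℝ) : ℝ :=
  Mfun (∫ ζ in (-L)..L, f ζ) ξ

lemma Mfun_eq_indicator (u : ℝ) :
    Mfun u = fun ξ => (Ioo 0 u).indicator (fun _ => (1 : ℝ)) ξ
      - (Ioo u 0).indicator (fun _ => (1 : ℝ)) ξ := by
  funext ξ
  simp only [Mfun, indicator_apply, mem_Ioo]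
  split_ifs <;> grind

lemma integrable_indicator_Ioo (L a b : ℝ) :
    Integrable ((Ioo a b).indicator (fun _ => (1 : ℝ))) (volume.restrict (Ioo (-L) L)) :=
  (integrable_const 1).indicator measurableSet_Ioo

lemma integrable_Mfun (L u : ℝ) : Integrable (Mfun u) (volume.restrict (Ioo (-L) L)) := by
  rw [Mfun_eq_indicator]
  exact (integrable_indicator_Ioo L 0 u).sub (integrable_indicator_Ioo L u 0)

lemma integral_Mfun (L u : ℝ) (h1 : -L ≤ u) (h2 : u ≤ L) :
    ∫ ξ in Ioo (-L) L, Mfun u ξ = u := by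
  rw [Mfun_eq_indicator,
    integral_sub (integrable_indicator_Ioo L 0 u) (integrable_indicator_Ioo L u 0),
    setIntegral_indicator measurableSet_Ioo, setIntegral_indicator measurableSet_Ioo,
    inter_eq_right.2 (Ioo_subset_Ioo (by linarith) h2),
    inter_eq_right.2 (Ioo_subset_Ioo h1 (by linarith))]
  simp only [setIntegral_const, Real.volume_real_Ioo, smul_eq_mul, mul_one, sub_zero, zero_sub]
  rcases le_total 0 u with h | h
  · rw [max_eq_left h, max_eq_right (by linarith)]; ring
  · rw [max_eq_right h, max_eq_left (by linarith)]; ring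

/-- Away from `0`, the constraint on `sign ξ * y` says that `y ∈ [0, 1]` or `y ∈ [-1, 0]`. -/
lemma bounds_of_sign {ξ y : ℝ} (h0 : ξ ≠ 0)
    (h : 0 ≤ Real.sign ξ * y ∧ Real.sign ξ * y ≤ 1) :
    (0 < ξ ∧ 0 ≤ y ∧ y ≤ 1) ∨ (ξ < 0 ∧ -1 ≤ y ∧ y ≤ 0) := by
  rcases lt_or_gt_of_ne h0 with h' | h'
  · rw [Real.sign_of_neg h'] at h
    exact Or.inr ⟨h', by linarith, by linarith⟩
  · rw [Real.sign_of_pos h'] at h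
    exact Or.inl ⟨h', by linarith, by linarith⟩

/-- The Maxwellian lies above any admissible value to the left of `u`, and below it to the right. -/
lemma Mfun_sub_sign {u ξ y : ℝ}
    (h : (0 < ξ ∧ 0 ≤ y ∧ y ≤ 1) ∨ (ξ < 0 ∧ -1 ≤ y ∧ y ≤ 0)) :
    (ξ < u → 0 ≤ Mfun u ξ - y) ∧ (u < ξ → Mfun u ξ - y ≤ 0) := by
  unfold Mfun
  split_ifs <;> grind

theorem stmt2 (L : ℝ) (hL : 0 < L) (f : ℝ → ℝ) (hf : Measurable f)
    (hbd : ∀ᵐ ξ ∂(volume.restrict (Set.Ioo (-L) L)),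
      0 ≤ Real.sign ξ * f ξ ∧ Real.sign ξ * f ξ ≤ 1)
    (φ : ℝ → ℝ) (hφ : ContDiff ℝ 1 φ) (hconv : StrictConvexOn ℝ Set.univ φ)
    (heq : ∫ ξ in (-L)..L, deriv φ ξ * (proj L f ξ - f ξ) = 0) :
    ∀ᵐ ξ ∂(volume.restrict (Set.Ioo (-L) L)), f ξ = proj L f ξ := by
  have hmono : StrictMono (deriv φ) := by
    rw [← strictMonoOn_univ]
    exact hconv.strictMonoOn_deriv fun x _ => hφ.differentiable one_ne_zero x
  have hne (c : ℝ) : ∀ᵐ ξ ∂(volume.restrict (Ioo (-L) L)), ξ ≠ c :=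
    ae_restrict_of_ae (Measure.ae_ne volume c)
  have hmem : ∀ᵐ ξ ∂(volume.restrict (Ioo (-L) L)), ξ ∈ Ioo (-L) L :=
    ae_restrict_mem measurableSet_Ioo
  have hb : ∀ᵐ ξ ∂(volume.restrict (Ioo (-L) L)),
      (0 < ξ ∧ 0 ≤ f ξ ∧ f ξ ≤ 1) ∨ (ξ < 0 ∧ -1 ≤ f ξ ∧ f ξ ≤ 0) := by
    filter_upwards [hbd, hne 0] with ξ h h0 using bounds_of_sign h0 h
  have hfi : Integrable f (volume.restrict (Ioo (-L) L)) := by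
    refine Integrable.of_bound hf.aestronglyMeasurable 1 ?_
    filter_upwards [hb] with ξ h
    rw [Real.norm_eq_abs, abs_le]
    grind
  have hint (g : ℝ → ℝ) : ∫ ξ in (-L)..L, g ξ = ∫ ξ in Ioo (-L) L, g ξ := by
    rw [intervalIntegral.integral_of_le (by linarith), integral_Ioc_eq_integral_Ioo]
  unfold proj at heq ⊢
  rw [hint] at heq ⊢
  rw [hint f] at heq
  set u := ∫ ξ in Ioo (-L) L, f ξ with hu
  have hu2 : u ≤ L := by
    rw [← integral_Mfun L L (by linarith) le_rfl]
    refine integral_mono_ae hfi (integrable_Mfun L L) ?_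
    filter_upwards [hb, hmem] with ξ h hm
    linarith [(Mfun_sub_sign (u := L) h).1 hm.2]
  have hu1 : -L ≤ u := by
    rw [← integral_Mfun L (-L) le_rfl (by linarith)]
    refine integral_mono_ae (integrable_Mfun L (-L)) hfi ?_
    filter_upwards [hb, hmem] with ξ h hm
    linarith [(Mfun_sub_sign (u := -L) h).2 hm.1]
  have hdi : Integrable (fun ξ => Mfun u ξ - f ξ) (volume.restrict (Ioo (-L) L)) :=
    (integrable_Mfun L u).sub hfi
  have hd0 : ∫ ξ in Ioo (-L) L, (Mfun u ξ - f ξ) = 0 := by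
    rw [integral_sub (integrable_Mfun L u) hfi, integral_Mfun L u hu1 hu2, ← hu, sub_self]
  have hcont : Continuous (deriv φ) := hφ.continuous_deriv le_rfl
  have hpi : Integrable (fun ξ => deriv φ ξ * (Mfun u ξ - f ξ))
      (volume.restrict (Ioo (-L) L)) := by
    -- A monotone weight is bounded on `(-L, L)` by its values at the endpoints.
    refine hdi.bdd_mul (c := max |deriv φ (-L)| |deriv φ L|) hcont.aestronglyMeasurable ?_
    filter_upwards [hmem] with ξ hm
    exact abs_le_max_abs_abs (hmono hm.1).le (hmono hm.2).le
  have hz : ∫ ξ in Ioo (-L) L, (deriv φ u - deriv φ ξ) * (Mfun u ξ - f ξ) = 0 := by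
    simp_rw [sub_mul (deriv φ u)]
    rw [integral_sub (hdi.const_mul _) hpi, integral_const_mul, hd0, heq]
    simp
  have hnn : 0 ≤ᵐ[volume.restrict (Ioo (-L) L)]
      fun ξ => (deriv φ u - deriv φ ξ) * (Mfun u ξ - f ξ) := by
    filter_upwards [hb, hne u] with ξ h hξ
    obtain ⟨h1, h2⟩ := Mfun_sub_sign (u := u) h
    rcases lt_or_gt_of_ne hξ with h' | h'
    · exact mul_nonneg (sub_nonneg.2 (hmono h').le) (h1 h')
    · exact mul_nonneg_of_nonpos_of_nonpos (sub_nonpos.2 (hmono h').le) (h2 h')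
  have hwi : Integrable (fun ξ => (deriv φ u - deriv φ ξ) * (Mfun u ξ - f ξ))
      (volume.restrict (Ioo (-L) L)) := by
    simp_rw [sub_mul (deriv φ u)]
    exact (hdi.const_mul _).sub hpi
  filter_upwards [(integral_eq_zero_iff_of_nonneg_ae hnn hwi).1 hz, hne u] with ξ h hξ
  rcases mul_eq_zero.1 h with h' | h'
  · exact absurd (hmono.injective (sub_eq_zero.1 h')).symm hξ
  · exact (sub_eq_zero.1 h').symm
end

section
/- Let F be a layer solution with data (V, g) and suppose V > ∫_0^L ξ g(ξ) dξ (shock case). Then for every y > 0, ∫_{−L}^{0} ξ F(y, ξ) dξ ≥ V − ∫_0^L ξ g(ξ) dξ > 0. -/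
/-!
Write `Φ(y) = ∫_0^L ξ F(y, ξ) dξ` for the incoming part of the flux. Since the total flux is `V`
and `Φ(0) = ∫_0^L ξ g(ξ) dξ`, the claim is that `Φ(y) ≤ Φ(0)`. Integrating the equation in `y` and
then in `ξ` over `(0, L)` (Fubini, `layer_flux_diff`), `Φ(y) - Φ(0)` is the integral over
`s ∈ (0, y)` of `∫_0^L (M(u(s), ξ) - F(s, ξ)) dξ`. The Maxwellian contributes at most `max (u(s)) 0`
(`layer_integral_Mfun_le`), while `F ≤ 0` for `ξ < 0` and `F ≥ 0` for `ξ > 0` give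
`max (u(s)) 0 ≤ ∫_0^L F(s, ξ) dξ`, so the inner integral is nonpositive
(`layer_source_nonpos`).
-/

open MeasureTheory Set Filter

/-- A layer solution with data `(V, g)`: `F : [0,∞) × (-L,L) → ℝ` measurable, with
`0 ≤ sign ξ · F(y,ξ) ≤ 1`; for each `ξ ≠ 0`, `y ↦ F(y,ξ)` is continuous on `[0,∞)`,
differentiable on `(0,∞)` with `ξ ∂_y F = M(u(y),ξ) - F`, `u(y) = ∫_{-L}^L F(y,·)`;
`F(0,ξ) = g(ξ)` on `(0,L)`; and `∫_{-L}^L ξ F(y,ξ) dξ = V` for all `y ≥ 0`. -/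
structure IsLayerSolution (L V : ℝ) (g : ℝ → ℝ) (F : ℝ → ℝ → ℝ) : Prop where
  meas : Measurable (Function.uncurry F)
  sgnBound : ∀ y ξ, 0 ≤ y → ξ ∈ Set.Ioo (-L) L →
    0 ≤ Real.sign ξ * F y ξ ∧ Real.sign ξ * F y ξ ≤ 1
  cont : ∀ ξ ∈ Set.Ioo (-L) L, ξ ≠ 0 → ContinuousOn (fun y => F y ξ) (Set.Ici 0)
  eqn : ∀ ξ ∈ Set.Ioo (-L) L, ξ ≠ 0 → ∀ y : ℝ, 0 < y →
    ∃ d : ℝ, HasDerivAt (fun z => F z ξ) d y ∧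
      ξ * d = Mfun (∫ ζ in (-L)..L, F y ζ) ξ - F y ξ
  bdry : ∀ ξ ∈ Set.Ioo (0 : ℝ) L, F 0 ξ = g ξ
  flux : ∀ y : ℝ, 0 ≤ y → (∫ ξ in (-L)..L, ξ * F y ξ) = V

lemma layer_measurable_Mfun : Measurable (fun p : ℝ × ℝ => Mfun p.1 p.2) := by
  unfold Mfun
  refine Measurable.ite ?_ measurable_const (Measurable.ite ?_ measurable_const measurable_const)
  · exact (measurableSet_lt measurable_const measurable_snd).inter
      (measurableSet_lt measurable_snd measurable_fst)
  · exact (measurableSet_lt measurable_fst measurable_snd).inter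
      (measurableSet_lt measurable_snd measurable_const)

lemma layer_abs_Mfun_le (u ξ : ℝ) : |Mfun u ξ| ≤ 1 := by
  unfold Mfun
  split_ifs <;> simp

lemma layer_integrableOn_Mfun (L u : ℝ) :
    IntegrableOn (fun ξ => Mfun u ξ) (Ioo 0 L) := by
  refine Measure.integrableOn_of_bounded (M := 1) (by simp) ?_ ?_
  · exact (layer_measurable_Mfun.comp measurable_prodMk_left).aestronglyMeasurable
  · exact Eventually.of_forall fun ξ => layer_abs_Mfun_le u ξ

lemma layer_integral_Mfun_le (L u : ℝ) :
    ∫ ξ in Ioo 0 L, Mfun u ξ ≤ max u 0 := by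
  have h1 : ∫ ξ in Ioo 0 L, Mfun u ξ = ∫ ξ in Ioo 0 L, (Ioo 0 u).indicator (fun _ => (1 : ℝ)) ξ := by
    refine setIntegral_congr_fun measurableSet_Ioo fun ξ hξ => ?_
    have h0 : 0 < ξ := hξ.1
    simp [Mfun, indicator, h0, h0.not_gt]
  have hi : Integrable ((Ioo 0 u).indicator (fun _ => (1 : ℝ))) :=
    (integrable_indicator_iff measurableSet_Ioo).2 (integrableOn_const (by simp))
  have h2 : ∫ ξ in Ioo 0 L, (Ioo 0 u).indicator (fun _ => (1 : ℝ)) ξ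
      ≤ ∫ ξ, (Ioo 0 u).indicator (fun _ => (1 : ℝ)) ξ :=
    setIntegral_le_integral hi
      (Eventually.of_forall fun ξ => indicator_nonneg (fun _ _ => zero_le_one) ξ)
  rw [integral_indicator measurableSet_Ioo] at h2
  rw [h1]
  simpa [Measure.real, ENNReal.toReal_ofReal'] using h2

section Layer

variable {L V : ℝ} {g : ℝ → ℝ} {F : ℝ → ℝ → ℝ}

lemma layer_pos_mem (hF : IsLayerSolution L V g F) (hL : 0 < L) {y ξ : ℝ} (hy : 0 ≤ y)
    (hξ : ξ ∈ Ioo 0 L) : 0 ≤ F y ξ ∧ F y ξ ≤ 1 := by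
  have h := hF.sgnBound y ξ hy ⟨by linarith [hξ.1], hξ.2⟩
  simpa [Real.sign_of_pos hξ.1] using h

lemma layer_neg_mem (hF : IsLayerSolution L V g F) (hL : 0 < L) {y ξ : ℝ} (hy : 0 ≤ y)
    (hξ : ξ ∈ Ioo (-L) 0) : -1 ≤ F y ξ ∧ F y ξ ≤ 0 := by
  have h := hF.sgnBound y ξ hy ⟨hξ.1, hξ.2.trans hL⟩
  rw [Real.sign_of_neg hξ.2] at h
  constructor <;> linarith [h.1, h.2]

lemma layer_measurable_slice (hF : IsLayerSolution L V g F) (y : ℝ) : Measurable (F y) :=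
  hF.meas.comp measurable_prodMk_left

lemma layer_integrableOn_pos (hF : IsLayerSolution L V g F) (hL : 0 < L) {y : ℝ} (hy : 0 ≤ y) :
    IntegrableOn (F y) (Ioo 0 L) := by
  refine Measure.integrableOn_of_bounded (M := 1) (by simp)
    (layer_measurable_slice hF y).aestronglyMeasurable ?_
  refine ae_restrict_of_forall_mem measurableSet_Ioo fun ξ hξ => ?_
  have := layer_pos_mem hF hL hy hξ
  rw [Real.norm_eq_abs, abs_le]
  constructor <;> linarith

lemma layer_integrableOn_neg (hF : IsLayerSolution L V g F) (hL : 0 < L) {y : ℝ} (hy : 0 ≤ y) :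
    IntegrableOn (F y) (Ioo (-L) 0) := by
  refine Measure.integrableOn_of_bounded (M := 1) (by simp)
    (layer_measurable_slice hF y).aestronglyMeasurable ?_
  refine ae_restrict_of_forall_mem measurableSet_Ioo fun ξ hξ => ?_
  have := layer_neg_mem hF hL hy hξ
  rw [Real.norm_eq_abs, abs_le]
  constructor <;> linarith

lemma layer_intervalIntegrable_pos (hF : IsLayerSolution L V g F) (hL : 0 < L) {y : ℝ}
    (hy : 0 ≤ y) : IntervalIntegrable (F y) volume 0 L :=
  (intervalIntegrable_iff_integrableOn_Ioo_of_le hL.le).2 (layer_integrableOn_pos hF hL hy)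

lemma layer_intervalIntegrable_neg (hF : IsLayerSolution L V g F) (hL : 0 < L) {y : ℝ}
    (hy : 0 ≤ y) : IntervalIntegrable (F y) volume (-L) 0 :=
  (intervalIntegrable_iff_integrableOn_Ioo_of_le (by linarith)).2
    (layer_integrableOn_neg hF hL hy)

/-- The derivative of the incoming flux is nonpositive: the gain `max u 0` never exceeds the
incoming mass `∫_0^L F`, because `u` is that mass plus a nonpositive contribution. -/
lemma layer_source_nonpos (hF : IsLayerSolution L V g F) (hL : 0 < L) {s : ℝ} (hs : 0 ≤ s) :
    ∫ ξ in Ioo 0 L, (Mfun (∫ ζ in (-L)..L, F s ζ) ξ - F s ξ) ≤ 0 := by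
  rw [integral_sub (layer_integrableOn_Mfun L _) (layer_integrableOn_pos hF hL hs)]
  have hM := layer_integral_Mfun_le L (∫ ζ in (-L)..L, F s ζ)
  have hsplit := intervalIntegral.integral_add_adjacent_intervals
    (layer_intervalIntegrable_neg hF hL hs) (layer_intervalIntegrable_pos hF hL hs)
  have hp : 0 ≤ ∫ ξ in Ioo 0 L, F s ξ :=
    setIntegral_nonneg measurableSet_Ioo fun ξ hξ => (layer_pos_mem hF hL hs hξ).1
  have hn : ∫ ξ in Ioo (-L) 0, F s ξ ≤ 0 :=
    setIntegral_nonpos measurableSet_Ioo fun ξ hξ => (layer_neg_mem hF hL hs hξ).2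
  rw [intervalIntegral.integral_of_le (by linarith : -L ≤ 0),
    intervalIntegral.integral_of_le hL.le, integral_Ioc_eq_integral_Ioo,
    integral_Ioc_eq_integral_Ioo] at hsplit
  have hmax : max (∫ ζ in (-L)..L, F s ζ) 0 ≤ ∫ ξ in Ioo 0 L, F s ξ :=
    max_le (by linarith) hp
  linarith

lemma layer_measurable_source (hF : IsLayerSolution L V g F) (hL : 0 < L) :
    Measurable (fun p : ℝ × ℝ => Mfun (∫ ζ in (-L)..L, F p.1 ζ) p.2 - F p.1 p.2) := by
  have hu : Measurable (fun s => ∫ ζ in (-L)..L, F s ζ) := by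
    simp only [intervalIntegral.integral_of_le (by linarith : -L ≤ L)]
    exact (hF.meas.stronglyMeasurable.integral_prod_right' (f := Function.uncurry F)
      (ν := volume.restrict (Ioc (-L) L))).measurable
  exact (layer_measurable_Mfun.comp ((hu.comp measurable_fst).prodMk measurable_snd)).sub hF.meas

lemma layer_source_bound (hF : IsLayerSolution L V g F) (hL : 0 < L) (u : ℝ) {s ξ : ℝ}
    (hs : 0 ≤ s) (hξ : ξ ∈ Ioo 0 L) : ‖Mfun u ξ - F s ξ‖ ≤ 2 := by
  have h1 := layer_pos_mem hF hL hs hξ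
  have h2 := abs_le.1 (layer_abs_Mfun_le u ξ)
  rw [Real.norm_eq_abs, abs_le]
  constructor <;> linarith [h2.1, h2.2]

/-- The equation integrated in `y`, for a fixed incoming velocity. -/
lemma layer_pointwise_diff (hF : IsLayerSolution L V g F) (hL : 0 < L) {y ξ : ℝ} (hy : 0 ≤ y)
    (hξ : ξ ∈ Ioo 0 L) :
    ∫ s in Ioo 0 y, (Mfun (∫ ζ in (-L)..L, F s ζ) ξ - F s ξ) = ξ * F y ξ - ξ * F 0 ξ := by
  have hmem : ξ ∈ Ioo (-L) L := ⟨by linarith [hξ.1], hξ.2⟩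
  have h := intervalIntegral.integral_eq_sub_of_hasDerivAt_of_le (a := 0) (b := y)
    (f := fun s => ξ * F s ξ) (f' := fun s => Mfun (∫ ζ in (-L)..L, F s ζ) ξ - F s ξ) hy
    (continuousOn_const.mul ((hF.cont ξ hmem hξ.1.ne').mono Icc_subset_Ici_self))
    (fun s hs => by
      obtain ⟨d, hd, he⟩ := hF.eqn ξ hmem hξ.1.ne' s hs.1
      simpa only [he] using hd.const_mul ξ)
    (by
      refine (intervalIntegrable_iff_integrableOn_Ioo_of_le hy).2 ?_
      refine Measure.integrableOn_of_bounded (M := 2) (by simp)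
        ((layer_measurable_source hF hL).comp measurable_prodMk_right).aestronglyMeasurable ?_
      exact ae_restrict_of_forall_mem measurableSet_Ioo fun s hs =>
        layer_source_bound hF hL _ hs.1.le hξ)
  rwa [intervalIntegral.integral_of_le hy, integral_Ioc_eq_integral_Ioo] at h

/-- The variation of the incoming flux between `0` and `y`, with the order of integration
exchanged. -/
lemma layer_flux_diff (hF : IsLayerSolution L V g F) (hL : 0 < L) {y : ℝ} (hy : 0 ≤ y) :
    ∫ ξ in Ioo 0 L, (ξ * F y ξ - ξ * F 0 ξ) =
      ∫ s in Ioo 0 y, ∫ ξ in Ioo 0 L, (Mfun (∫ ζ in (-L)..L, F s ζ) ξ - F s ξ) := by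
  rw [integral_integral_swap]
  · exact (setIntegral_congr_fun measurableSet_Ioo fun ξ hξ =>
      layer_pointwise_diff hF hL hy hξ).symm
  · rw [Measure.prod_restrict]
    refine Measure.integrableOn_of_bounded (M := 2) ?_
      (layer_measurable_source hF hL).aestronglyMeasurable ?_
    · rw [Measure.prod_prod]
      simp [ENNReal.mul_eq_top]
    · exact ae_restrict_of_forall_mem (measurableSet_Ioo.prod measurableSet_Ioo) fun p hp =>
        layer_source_bound hF hL _ hp.1.1.le hp.2

lemma layer_flux_integrable_pos (hF : IsLayerSolution L V g F) (hL : 0 < L) {y : ℝ}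
    (hy : 0 ≤ y) : IntervalIntegrable (fun ξ => ξ * F y ξ) volume 0 L :=
  (layer_intervalIntegrable_pos hF hL hy).continuousOn_mul continuousOn_id

lemma layer_flux_integrable_neg (hF : IsLayerSolution L V g F) (hL : 0 < L) {y : ℝ}
    (hy : 0 ≤ y) : IntervalIntegrable (fun ξ => ξ * F y ξ) volume (-L) 0 :=
  (layer_intervalIntegrable_neg hF hL hy).continuousOn_mul continuousOn_id

/-- The incoming flux at `y` is at most the incoming flux prescribed by the boundary datum. -/
lemma layer_flux_le (hF : IsLayerSolution L V g F) (hL : 0 < L) {y : ℝ} (hy : 0 ≤ y) :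
    ∫ ξ in (0 : ℝ)..L, ξ * F y ξ ≤ ∫ ξ in (0 : ℝ)..L, ξ * g ξ := by
  have hg : ∫ ξ in Ioo 0 L, ξ * g ξ = ∫ ξ in Ioo 0 L, ξ * F 0 ξ :=
    setIntegral_congr_fun measurableSet_Ioo fun ξ hξ => by simp only [hF.bdry ξ hξ]
  have h := layer_flux_diff hF hL hy
  rw [integral_sub
    ((intervalIntegrable_iff_integrableOn_Ioo_of_le hL.le).1 (layer_flux_integrable_pos hF hL hy))
    ((intervalIntegrable_iff_integrableOn_Ioo_of_le hL.le).1
      (layer_flux_integrable_pos hF hL le_rfl))] at h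
  have hle : ∫ s in Ioo 0 y, ∫ ξ in Ioo 0 L, (Mfun (∫ ζ in (-L)..L, F s ζ) ξ - F s ξ) ≤ 0 :=
    setIntegral_nonpos measurableSet_Ioo fun s hs => layer_source_nonpos hF hL hs.1.le
  rw [intervalIntegral.integral_of_le hL.le, intervalIntegral.integral_of_le hL.le,
    integral_Ioc_eq_integral_Ioo, integral_Ioc_eq_integral_Ioo, hg]
  linarith

end Layer

theorem stmt7 (L V : ℝ) (hL : 0 < L) (g : ℝ → ℝ) (hgm : Measurable g)
    (hg01 : ∀ ξ ∈ Set.Ioo (0 : ℝ) L, g ξ ∈ Set.Icc (0 : ℝ) 1)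
    (hV : V ∈ Set.Icc 0 (L ^ 2 / 2))
    (F : ℝ → ℝ → ℝ) (hF : IsLayerSolution L V g F)
    (hshock : (∫ ξ in (0 : ℝ)..L, ξ * g ξ) < V) :
    ∀ y : ℝ, 0 < y →
      (V - ∫ ξ in (0 : ℝ)..L, ξ * g ξ) ≤ (∫ ξ in (-L)..(0 : ℝ), ξ * F y ξ) ∧
      0 < V - ∫ ξ in (0 : ℝ)..L, ξ * g ξ := by
  intro y hy
  have hsplit := intervalIntegral.integral_add_adjacent_intervals
    (layer_flux_integrable_neg hF hL hy.le) (layer_flux_integrable_pos hF hL hy.le)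
  have hle := layer_flux_le hF hL hy.le
  rw [hF.flux y hy.le] at hsplit
  constructor <;> linarith
end
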